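/- Under the same hypotheses (commuting pairs (H₁⁰,H₂⁰), (H₁,H₂) with H_j − H_j⁰ ∈ B₂(𝓗), and finite-dimensional approximants and projections from the Weyl–von Neumann–Berg construction), for j = 1,2 and every integer k ≥ 1 the quantities ‖P_N⁰[(P_N⁰ H_j⁰ P_N⁰)^k − (P_N H_j P_N)^k] P_N‖₂ are uniformly bounded in N. -/

import Mathlib

open MeasureTheory Filter Topology

noncomputable section

/-- The trace computed along a Hilbert basis: `Tr T = Σ_i ⟪b i, T (b i)⟫`. -/
def traceAlong {H : Type*} [NormedAddCommGroup H] [InnerProductSpace ℂ H] [CompleteSpace H]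
    {ι : Type*} (b : HilbertBasis ι ℂ H) (T : H →L[ℂ] H) : ℂ :=
  ∑' i, (inner ℂ (b i) (T (b i)) : ℂ)

/-- The Schatten `p`-norm `‖T‖_p = (Tr |T|^p)^{1/p}`, via the functional calculus
`|T|^p = f(T*T)`, `f(t) = |t|^{p/2}`, with the trace computed along the basis `b`. -/
def schattenNorm {H : Type*} [NormedAddCommGroup H] [InnerProductSpace ℂ H] [CompleteSpace H]
    {ι : Type*} (b : HilbertBasis ι ℂ H) (p : ℝ) (T : H →L[ℂ] H) : ℝ :=
  (∑' i, (inner ℂ (b i)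
      ((cfc (fun t : ℝ => |t| ^ (p / 2)) (ContinuousLinearMap.adjoint T * T)) (b i)) : ℂ).re)
    ^ (1 / p)

/-!
Writing `X = P₀A₀P₀` and `Y = PAP`, idempotence gives `P₀(X^k - Y^k)P = X^k Z - Z Y^k` with
`Z = P₀P`. The telescoping identity `X^(k+1) Z - Z Y^(k+1) = X (X^k Z - Z Y^k) + (X Z - Z Y) Y^k`
reduces everything to `k = 1`, and there
`X Z - Z Y = P₀ ((A₀ - A) + [A₀, P₀] + [A, P]) P`.
Hence the Hilbert–Schmidt norm is at most
`k max(‖A₀‖, ‖A‖)^(k-1) (‖A - A₀‖₂ + ‖[A₀, P₀]‖₂ + ‖[A, P]‖₂)`.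
-/

open scoped ENNReal

theorem tsum_Lp_add_le {ι : Type*} (f g : ι → ℝ≥0∞) {p : ℝ} (hp : 1 ≤ p) :
    (∑' i, (f i + g i) ^ p) ^ (1 / p) ≤
      (∑' i, f i ^ p) ^ (1 / p) + (∑' i, g i ^ p) ^ (1 / p) := by
  let _ : MeasurableSpace ι := ⊤
  simpa only [lintegral_count, Pi.add_apply] using
    ENNReal.lintegral_Lp_add_le (μ := Measure.count) (f := f) (g := g)
      measurable_from_top.aemeasurable measurable_from_top.aemeasurable hp

section HilbertSchmidt

variable {𝕜 E F G ι κ : Type*} [RCLike 𝕜]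
  [NormedAddCommGroup E] [InnerProductSpace 𝕜 E]
  [NormedAddCommGroup F] [InnerProductSpace 𝕜 F]
  [NormedAddCommGroup G] [InnerProductSpace 𝕜 G]

theorem tsum_enorm_inner_sq (b : HilbertBasis ι 𝕜 E) (x : E) :
    ∑' i, ‖inner 𝕜 (b i) x‖ₑ ^ 2 = ‖x‖ₑ ^ 2 := by
  have hasSum_sq : HasSum (fun i => ‖inner 𝕜 (b i) x‖ ^ 2) (‖x‖ ^ 2) := by
    simpa [b.repr_apply_apply] using lp.hasSum_norm (p := 2) (by norm_num) (b.repr x)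
  simp only [← ofReal_norm, ← ENNReal.ofReal_pow (norm_nonneg _)]
  rw [← hasSum_sq.tsum_eq,
    ENNReal.ofReal_tsum_of_nonneg (fun _ => by positivity) hasSum_sq.summable]

/-- The Hilbert–Schmidt norm `‖T‖₂`, with value `∞` when `T` is not a Hilbert–Schmidt operator. It
is computed along the Hilbert basis `b` of the domain. -/
def hsENorm (b : HilbertBasis ι 𝕜 E) (T : E →L[𝕜] F) : ℝ≥0∞ :=
  (∑' i, ‖T (b i)‖ₑ ^ 2) ^ (1 / 2 : ℝ)

theorem hsENorm_ne_top_iff_summable (b : HilbertBasis ι 𝕜 E) (T : E →L[𝕜] F) :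
    hsENorm b T ≠ ∞ ↔ Summable fun i => ‖T (b i)‖ ^ 2 := by
  have h := tsum_enorm_ne_top_iff_summable_norm (f := fun i => ‖T (b i)‖ ^ 2)
  simpa [hsENorm, enorm_pow] using h

theorem hsENorm_adjoint [CompleteSpace E] [CompleteSpace F]
    (b : HilbertBasis ι 𝕜 E) (c : HilbertBasis κ 𝕜 F) (T : E →L[𝕜] F) :
    hsENorm c (ContinuousLinearMap.adjoint T) = hsENorm b T := by
  unfold hsENorm
  congr 1
  calc ∑' j, ‖ContinuousLinearMap.adjoint T (c j)‖ₑ ^ 2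
      = ∑' j, ∑' i, ‖inner 𝕜 (b i) (ContinuousLinearMap.adjoint T (c j))‖ₑ ^ 2 := by
        simp only [tsum_enorm_inner_sq]
    _ = ∑' i, ∑' j, ‖inner 𝕜 (c j) (T (b i))‖ₑ ^ 2 := by
        rw [ENNReal.tsum_comm]
        simp only [ContinuousLinearMap.adjoint_inner_right, ← ofReal_norm, norm_inner_symm (T _)]
    _ = ∑' i, ‖T (b i)‖ₑ ^ 2 := by simp only [tsum_enorm_inner_sq]

theorem hsENorm_add_le (b : HilbertBasis ι 𝕜 E) (S T : E →L[𝕜] F) :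
    hsENorm b (S + T) ≤ hsENorm b S + hsENorm b T := by
  calc hsENorm b (S + T) ≤ (∑' i, (‖S (b i)‖ₑ + ‖T (b i)‖ₑ) ^ 2) ^ (1 / 2 : ℝ) := by
        unfold hsENorm
        gcongr
        exact enorm_add_le _ _
    _ ≤ hsENorm b S + hsENorm b T := by
        simpa only [hsENorm, ENNReal.rpow_two] using
          tsum_Lp_add_le (fun i => ‖S (b i)‖ₑ) (fun i => ‖T (b i)‖ₑ) one_le_two

theorem hsENorm_neg (b : HilbertBasis ι 𝕜 E) (T : E →L[𝕜] F) : hsENorm b (-T) = hsENorm b T := by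
  simp [hsENorm]

theorem hsENorm_comp_le_enorm_mul (b : HilbertBasis ι 𝕜 E) (A : F →L[𝕜] G) (T : E →L[𝕜] F) :
    hsENorm b (A ∘L T) ≤ ‖A‖ₑ * hsENorm b T := by
  calc hsENorm b (A ∘L T) ≤ (∑' i, ‖A‖ₑ ^ 2 * ‖T (b i)‖ₑ ^ 2) ^ (1 / 2 : ℝ) := by
        unfold hsENorm
        gcongr with i
        rw [← mul_pow]
        gcongr
        exact A.le_opENorm (T (b i))
    _ = ‖A‖ₑ * hsENorm b T := by
        rw [ENNReal.tsum_mul_left, ENNReal.mul_rpow_of_nonneg _ _ (by norm_num), hsENorm,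
          ← ENNReal.rpow_two, ← ENNReal.rpow_mul]
        norm_num

theorem hsENorm_comp_le_mul_enorm [CompleteSpace E] [CompleteSpace F] [CompleteSpace G]
    (b : HilbertBasis ι 𝕜 E) (c : HilbertBasis κ 𝕜 F) (T : F →L[𝕜] G) (A : E →L[𝕜] F) :
    hsENorm b (T ∘L A) ≤ hsENorm c T * ‖A‖ₑ := by
  obtain ⟨_, d, -⟩ := exists_hilbertBasis 𝕜 G
  rw [← hsENorm_adjoint b d, ← hsENorm_adjoint c d, ContinuousLinearMap.adjoint_comp, mul_comm,
    ← LinearIsometryEquiv.enorm_map ContinuousLinearMap.adjoint A]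
  exact hsENorm_comp_le_enorm_mul d _ _

theorem hsENorm_comp_pow_le [CompleteSpace E] [CompleteSpace F]
    (b : HilbertBasis ι 𝕜 E) (T : E →L[𝕜] F) (A : E →L[𝕜] E) (k : ℕ) :
    hsENorm b (T ∘L A ^ k) ≤ hsENorm b T * ‖A‖ₑ ^ k := by
  induction k with
  | zero => simp [ContinuousLinearMap.one_def]
  | succ k ih =>
    calc hsENorm b (T ∘L A ^ (k + 1)) = hsENorm b ((T ∘L A ^ k) ∘L A) := by
          rw [pow_succ, ContinuousLinearMap.mul_def, ContinuousLinearMap.comp_assoc]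
      _ ≤ hsENorm b (T ∘L A ^ k) * ‖A‖ₑ := hsENorm_comp_le_mul_enorm b b _ _
      _ ≤ hsENorm b T * ‖A‖ₑ ^ k * ‖A‖ₑ := by gcongr
      _ = hsENorm b T * ‖A‖ₑ ^ (k + 1) := by rw [pow_succ, mul_assoc]

theorem hsENorm_ne_top_of_finiteDimensional_range [CompleteSpace E] (b : HilbertBasis ι 𝕜 E)
    (T : E →L[𝕜] F) [FiniteDimensional 𝕜 (LinearMap.range (T : E →ₗ[𝕜] F))] :
    hsENorm b T ≠ ∞ := by
  have : CompleteSpace (LinearMap.range (T : E →ₗ[𝕜] F)) := FiniteDimensional.complete 𝕜 _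
  let e := (stdOrthonormalBasis 𝕜 (LinearMap.range (T : E →ₗ[𝕜] F))).toHilbertBasis
  have adjoint_ne_top : hsENorm e (ContinuousLinearMap.adjoint T.rangeRestrict) ≠ ∞ :=
    (hsENorm_ne_top_iff_summable e _).2 Summable.of_finite
  rwa [hsENorm_adjoint b e] at adjoint_ne_top

theorem summable_norm_sq_commutator_of_finiteDimensional_range [CompleteSpace E]
    (b : HilbertBasis ι 𝕜 E) (A P : E →L[𝕜] E)
    [FiniteDimensional 𝕜 (LinearMap.range (P : E →ₗ[𝕜] E))] :
    Summable fun i => ‖(A * P - P * A) (b i)‖ ^ 2 := by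
  have hP : hsENorm b P ≠ ∞ := hsENorm_ne_top_of_finiteDimensional_range b P
  rw [← hsENorm_ne_top_iff_summable]
  refine ne_top_of_le_ne_top (b := ‖A‖ₑ * hsENorm b P + hsENorm b P * ‖A‖ₑ) (by finiteness) ?_
  calc hsENorm b (A * P - P * A) ≤ hsENorm b (A * P) + hsENorm b (P * A) := by
        simpa only [sub_eq_add_neg, hsENorm_neg] using hsENorm_add_le b (A * P) (-(P * A))
    _ ≤ ‖A‖ₑ * hsENorm b P + hsENorm b P * ‖A‖ₑ :=
        add_le_add (hsENorm_comp_le_enorm_mul b A P) (hsENorm_comp_le_mul_enorm b b P A)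

theorem hsENorm_pow_comp_sub_comp_pow_le [CompleteSpace E] [CompleteSpace F]
    (b : HilbertBasis ι 𝕜 E) {X : F →L[𝕜] F} {Y : E →L[𝕜] E} (Z : E →L[𝕜] F) {M : ℝ≥0∞}
    (hX : ‖X‖ₑ ≤ M) (hY : ‖Y‖ₑ ≤ M) (k : ℕ) :
    hsENorm b ((X ^ k) ∘L Z - Z ∘L Y ^ k) ≤ k * M ^ (k - 1) * hsENorm b (X ∘L Z - Z ∘L Y) := by
  induction k with
  | zero => simp [hsENorm, ContinuousLinearMap.one_def]
  | succ k ih =>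
    have telescope : (X ^ (k + 1)) ∘L Z - Z ∘L Y ^ (k + 1) =
        X ∘L ((X ^ k) ∘L Z - Z ∘L Y ^ k) + (X ∘L Z - Z ∘L Y) ∘L Y ^ k := by
      simp only [pow_succ', ContinuousLinearMap.mul_def, ContinuousLinearMap.comp_sub,
        ContinuousLinearMap.sub_comp, ContinuousLinearMap.comp_assoc]
      abel
    set D := hsENorm b (X ∘L Z - Z ∘L Y)
    calc hsENorm b ((X ^ (k + 1)) ∘L Z - Z ∘L Y ^ (k + 1))
        ≤ ‖X‖ₑ * hsENorm b ((X ^ k) ∘L Z - Z ∘L Y ^ k) + D * ‖Y‖ₑ ^ k := by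
          rw [telescope]
          exact (hsENorm_add_le b _ _).trans <|
            add_le_add (hsENorm_comp_le_enorm_mul b _ _) (hsENorm_comp_pow_le b _ _ k)
      _ ≤ M * (k * M ^ (k - 1) * D) + D * M ^ k := by gcongr
      _ = k * (M * M ^ (k - 1)) * D + M ^ k * D := by ring
      _ = k * M ^ k * D + M ^ k * D := by
          rcases eq_or_ne k 0 with rfl | hk
          · simp
          · rw [mul_pow_sub_one hk]
      _ = (k + 1 : ℕ) * M ^ (k + 1 - 1) * D := by
          push_cast
          ring

end HilbertSchmidt

section Compression

theorem commute_compression {R : Type*} [Semigroup R] {p : R} (hp : IsIdempotentElem p) (a : R) :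
    Commute (p * a * p) p := by
  rw [commute_iff_eq, hp.mul_mul_self, mul_assoc, hp.mul_self_mul]

theorem norm_compression_le {R : Type*} [NonUnitalNormedRing R] [StarRing R] [CStarRing R] {p : R}
    (hp : IsStarProjection p) (a : R) : ‖p * a * p‖ ≤ ‖a‖ := by
  have norm_le_one : ‖p‖ ≤ 1 := hp.norm_le
  calc ‖p * a * p‖ ≤ ‖p‖ * ‖a‖ * ‖p‖ := norm_mul₃_le
    _ ≤ 1 * ‖a‖ * 1 := by gcongr
    _ = ‖a‖ := by rw [one_mul, mul_one]

theorem mul_compression_pow_sub_mul {R : Type*} [Ring R] {p q : R}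
    (hp : IsIdempotentElem p) (hq : IsIdempotentElem q) (a c : R) (k : ℕ) :
    p * ((p * a * p) ^ k - (q * c * q) ^ k) * q =
      (p * a * p) ^ k * (p * q) - p * q * (q * c * q) ^ k := by
  have hpk := ((commute_compression hp a).pow_left k).eq
  have hqk := ((commute_compression hq c).pow_left k).eq
  rw [mul_sub, sub_mul, ← hpk, mul_assoc p _ q, hqk, ← mul_assoc p q, mul_assoc _ p q]

theorem compression_mul_sub_mul_compression {R : Type*} [Ring R] {p q : R}
    (hp : IsIdempotentElem p) (hq : IsIdempotentElem q) (a c : R) :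
    p * a * p * (p * q) - p * q * (q * c * q) =
      p * (-(c - a) + (a * p - p * a) + (c * q - q * c)) * q := by
  simp only [mul_add, mul_sub, mul_neg, add_mul, sub_mul, neg_mul, ← mul_assoc, hp.eq,
    hp.mul_mul_self, hq.mul_mul_self]
  abel

variable {𝕜 H ι : Type*} [RCLike 𝕜] [NormedAddCommGroup H] [InnerProductSpace 𝕜 H]
  [CompleteSpace H]

theorem hsENorm_compression_mul_sub_mul_compression_le (b : HilbertBasis ι 𝕜 H)
    {P₀ P : H →L[𝕜] H} (hP₀ : IsStarProjection P₀) (hP : IsStarProjection P) (A₀ A : H →L[𝕜] H) :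
    hsENorm b (P₀ * A₀ * P₀ * (P₀ * P) - P₀ * P * (P * A * P)) ≤
      hsENorm b (A - A₀) + hsENorm b (A₀ * P₀ - P₀ * A₀) + hsENorm b (A * P - P * A) := by
  rw [compression_mul_sub_mul_compression hP₀.isIdempotentElem hP.isIdempotentElem]
  set S := -(A - A₀) + (A₀ * P₀ - P₀ * A₀) + (A * P - P * A)
  have enorm_P₀_le : ‖P₀‖ₑ ≤ 1 := by simpa [← ofReal_norm] using hP₀.norm_le
  have enorm_P_le : ‖P‖ₑ ≤ 1 := by simpa [← ofReal_norm] using hP.norm_le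
  calc hsENorm b (P₀ * S * P) ≤ hsENorm b (P₀ * S) * ‖P‖ₑ := hsENorm_comp_le_mul_enorm b b _ _
    _ ≤ ‖P₀‖ₑ * hsENorm b S * ‖P‖ₑ := by
        gcongr
        exact hsENorm_comp_le_enorm_mul b _ _
    _ ≤ 1 * hsENorm b S * 1 := by gcongr
    _ = hsENorm b S := by rw [one_mul, mul_one]
    _ ≤ hsENorm b (A - A₀) + hsENorm b (A₀ * P₀ - P₀ * A₀) + hsENorm b (A * P - P * A) := by
        rw [← hsENorm_neg b (A - A₀)]
        exact (hsENorm_add_le b _ _).trans (by gcongr; exact hsENorm_add_le b _ _)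

theorem hsENorm_compression_pow_sub_le (b : HilbertBasis ι 𝕜 H) {P₀ P : H →L[𝕜] H}
    (hP₀ : IsStarProjection P₀) (hP : IsStarProjection P) (A₀ A : H →L[𝕜] H) (k : ℕ) :
    hsENorm b (P₀ * ((P₀ * A₀ * P₀) ^ k - (P * A * P) ^ k) * P) ≤
      k * max ‖A₀‖ₑ ‖A‖ₑ ^ (k - 1) *
        (hsENorm b (A - A₀) + hsENorm b (A₀ * P₀ - P₀ * A₀) + hsENorm b (A * P - P * A)) := by
  have enorm_X_le : ‖P₀ * A₀ * P₀‖ₑ ≤ max ‖A₀‖ₑ ‖A‖ₑ :=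
    (enorm_le_iff_norm_le.2 (norm_compression_le hP₀ A₀)).trans (le_max_left _ _)
  have enorm_Y_le : ‖P * A * P‖ₑ ≤ max ‖A₀‖ₑ ‖A‖ₑ :=
    (enorm_le_iff_norm_le.2 (norm_compression_le hP A)).trans (le_max_right _ _)
  rw [mul_compression_pow_sub_mul hP₀.isIdempotentElem hP.isIdempotentElem]
  refine (hsENorm_pow_comp_sub_comp_pow_le b (P₀ * P) enorm_X_le enorm_Y_le k).trans ?_
  gcongr
  exact hsENorm_compression_mul_sub_mul_compression_le b hP₀ hP A₀ A

end Compression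

section Schatten

variable {H ι : Type*} [NormedAddCommGroup H] [InnerProductSpace ℂ H] [CompleteSpace H]

theorem schattenNorm_two_eq_toReal_hsENorm (b : HilbertBasis ι ℂ H) (T : H →L[ℂ] H) :
    schattenNorm b 2 T = (hsENorm b T).toReal := by
  have hpos : 0 ≤ ContinuousLinearMap.adjoint T * T := star_mul_self_nonneg T
  have cfc_eq : cfc (fun t : ℝ => |t| ^ ((2 : ℝ) / 2)) (ContinuousLinearMap.adjoint T * T) =
      ContinuousLinearMap.adjoint T * T := by
    conv_rhs => rw [← cfc_id' ℝ (ContinuousLinearMap.adjoint T * T) (.of_nonneg hpos)]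
    refine cfc_congr fun t ht => ?_
    simp [abs_of_nonneg (spectrum_nonneg_of_nonneg hpos ht)]
  have inner_eq (i : ι) :
      (inner ℂ (b i) ((ContinuousLinearMap.adjoint T * T) (b i))).re = ‖T (b i)‖ ^ 2 :=
    (T.apply_norm_sq_eq_inner_adjoint_right (b i)).symm
  simp only [schattenNorm, cfc_eq, inner_eq]
  rw [hsENorm, ← ENNReal.toReal_rpow, ENNReal.tsum_toReal_eq (fun _ => by finiteness)]
  simp only [ENNReal.toReal_pow, toReal_enorm]

theorem schattenNorm_two_compression_pow_sub_le (b : HilbertBasis ι ℂ H) {A₀ A P₀ P : H →L[ℂ] H}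
    (hV : Summable fun i => ‖(A - A₀) (b i)‖ ^ 2)
    (hP₀ : IsStarProjection P₀) (hP : IsStarProjection P)
    (hP₀comm : Summable fun i => ‖(A₀ * P₀ - P₀ * A₀) (b i)‖ ^ 2)
    (hPcomm : Summable fun i => ‖(A * P - P * A) (b i)‖ ^ 2) (k : ℕ) :
    schattenNorm b 2 (P₀ * ((P₀ * A₀ * P₀) ^ k - (P * A * P) ^ k) * P) ≤
      k * max ‖A₀‖ ‖A‖ ^ (k - 1) *
        (schattenNorm b 2 (A - A₀) + schattenNorm b 2 (A₀ * P₀ - P₀ * A₀) +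
          schattenNorm b 2 (A * P - P * A)) := by
  rw [← hsENorm_ne_top_iff_summable] at hV hP₀comm hPcomm
  simp only [schattenNorm_two_eq_toReal_hsENorm]
  refine (ENNReal.toReal_mono (by finiteness)
    (hsENorm_compression_pow_sub_le b hP₀ hP A₀ A k)).trans_eq ?_
  rw [ENNReal.toReal_mul, ENNReal.toReal_mul, ENNReal.toReal_natCast, ENNReal.toReal_pow,
    ENNReal.toReal_max enorm_ne_top enorm_ne_top, toReal_enorm, toReal_enorm,
    ENNReal.toReal_add (by finiteness) hPcomm, ENNReal.toReal_add hV hP₀comm]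

theorem stmt15_general {ν : Type*} (b : HilbertBasis ι ℂ H) {A₀ A : H →L[ℂ] H}
    (hV : Summable fun i => ‖(A - A₀) (b i)‖ ^ 2) {P₀ P : ν → H →L[ℂ] H}
    (hP₀ : ∀ N, IsStarProjection (P₀ N)) (hP : ∀ N, IsStarProjection (P N))
    (hP₀comm : ∀ N, Summable fun i => ‖(A₀ * P₀ N - P₀ N * A₀) (b i)‖ ^ 2)
    (hPcomm : ∀ N, Summable fun i => ‖(A * P N - P N * A) (b i)‖ ^ 2)
    (hP₀bdd : BddAbove (Set.range fun N => schattenNorm b 2 (A₀ * P₀ N - P₀ N * A₀)))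
    (hPbdd : BddAbove (Set.range fun N => schattenNorm b 2 (A * P N - P N * A))) (k : ℕ) :
    ∃ C : ℝ, ∀ N,
      schattenNorm b 2 (P₀ N * ((P₀ N * A₀ * P₀ N) ^ k - (P N * A * P N) ^ k) * P N) ≤ C := by
  obtain ⟨C₀, hC₀⟩ := hP₀bdd
  obtain ⟨C, hC⟩ := hPbdd
  refine ⟨k * max ‖A₀‖ ‖A‖ ^ (k - 1) * (schattenNorm b 2 (A - A₀) + C₀ + C), fun N => ?_⟩
  refine (schattenNorm_two_compression_pow_sub_le b hV (hP₀ N) (hP N)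
    (hP₀comm N) (hPcomm N) k).trans ?_
  gcongr
  exacts [hC₀ ⟨N, rfl⟩, hC ⟨N, rfl⟩]

end Schatten

/-- Under the same hypotheses, for `j = 1,2` and every `k ≥ 1` the
quantities `‖P_N⁰[(P_N⁰H_j⁰P_N⁰)^k − (P_N H_j P_N)^k]P_N‖₂` are uniformly bounded in `N`. -/
theorem stmt15
 {H : Type*} [NormedAddCommGroup H] [InnerProductSpace ℂ H] [CompleteSpace H]
    [TopologicalSpace.SeparableSpace H]
    (b : HilbertBasis ℕ ℂ H)
    (H10 H20 H1 H2 : H →L[ℂ] H)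
    (h10sa : IsSelfAdjoint H10) (h20sa : IsSelfAdjoint H20)
    (h1sa : IsSelfAdjoint H1) (h2sa : IsSelfAdjoint H2)
    (hcomm0 : Commute H10 H20) (hcomm : Commute H1 H2)
    (hV1 : Summable fun i => ‖(H1 - H10) (b i)‖ ^ 2)
    (hV2 : Summable fun i => ‖(H2 - H20) (b i)‖ ^ 2)
    (P0 P : ℕ → H →L[ℂ] H)
    (hP0proj : ∀ N, P0 N * P0 N = P0 N) (hP0sa : ∀ N, IsSelfAdjoint (P0 N))
    (hP0fin : ∀ N, FiniteDimensional ℂ (LinearMap.range (P0 N : H →ₗ[ℂ] H)))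
    (hP0mono : ∀ N, LinearMap.range (P0 N : H →ₗ[ℂ] H)
      ≤ LinearMap.range (P0 (N + 1) : H →ₗ[ℂ] H))
    (hP0lim : ∀ x : H, Tendsto (fun N => P0 N x) atTop (𝓝 x))
    (hPproj : ∀ N, P N * P N = P N) (hPsa : ∀ N, IsSelfAdjoint (P N))
    (hPfin : ∀ N, FiniteDimensional ℂ (LinearMap.range (P N : H →ₗ[ℂ] H)))
    (hPmono : ∀ N, LinearMap.range (P N : H →ₗ[ℂ] H)
      ≤ LinearMap.range (P (N + 1) : H →ₗ[ℂ] H))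
    (hPlim : ∀ x : H, Tendsto (fun N => P N x) atTop (𝓝 x))
    (H10N H20N H1N H2N : ℕ → H →L[ℂ] H)
    (h10Nsa : ∀ N, IsSelfAdjoint (H10N N)) (h20Nsa : ∀ N, IsSelfAdjoint (H20N N))
    (h1Nsa : ∀ N, IsSelfAdjoint (H1N N)) (h2Nsa : ∀ N, IsSelfAdjoint (H2N N))
    (hcomm0N : ∀ N, Commute (H10N N) (H20N N)) (hcommN : ∀ N, Commute (H1N N) (H2N N))
    (hsub0 : ∀ N, P0 N * H10N N * P0 N = H10N N * P0 N
      ∧ P0 N * H20N N * P0 N = H20N N * P0 N)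
    (hsub : ∀ N, P N * H1N N * P N = H1N N * P N ∧ P N * H2N N * P N = H2N N * P N)
    (happrox0 : ∀ p : ℝ, 2 ≤ p →
      Tendsto (fun N => schattenNorm b p (H10 * P0 N - P0 N * H10)) atTop (𝓝 0) ∧
      Tendsto (fun N => schattenNorm b p (H20 * P0 N - P0 N * H20)) atTop (𝓝 0) ∧
      Tendsto (fun N => schattenNorm b p (P0 N * H10 * P0 N - H10N N * P0 N)) atTop (𝓝 0) ∧
      Tendsto (fun N => schattenNorm b p (P0 N * H20 * P0 N - H20N N * P0 N)) atTop (𝓝 0))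
    (happrox : ∀ p : ℝ, 2 ≤ p →
      Tendsto (fun N => schattenNorm b p (H1 * P N - P N * H1)) atTop (𝓝 0) ∧
      Tendsto (fun N => schattenNorm b p (H2 * P N - P N * H2)) atTop (𝓝 0) ∧
      Tendsto (fun N => schattenNorm b p (P N * H1 * P N - H1N N * P N)) atTop (𝓝 0) ∧
      Tendsto (fun N => schattenNorm b p (P N * H2 * P N - H2N N * P N)) atTop (𝓝 0))
    : ∀ k : ℕ, 1 ≤ k → ∃ C : ℝ, ∀ N,
      schattenNorm b 2 (P0 N * ((P0 N * H10 * P0 N) ^ k - (P N * H1 * P N) ^ k) * P N)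
        ≤ C ∧
      schattenNorm b 2 (P0 N * ((P0 N * H20 * P0 N) ^ k - (P N * H2 * P N) ^ k) * P N)
        ≤ C := by
  intro k _
  have hP0 N : IsStarProjection (P0 N) := ⟨hP0proj N, hP0sa N⟩
  have hP N : IsStarProjection (P N) := ⟨hPproj N, hPsa N⟩
  have hP0comm (A : H →L[ℂ] H) N :=
    summable_norm_sq_commutator_of_finiteDimensional_range b A (P0 N)
  have hPcomm (A : H →L[ℂ] H) N :=
    summable_norm_sq_commutator_of_finiteDimensional_range b A (P N)
  obtain ⟨h10, h20, -⟩ := happrox0 2 le_rfl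
  obtain ⟨h1, h2, -⟩ := happrox 2 le_rfl
  obtain ⟨C₁, hC₁⟩ := stmt15_general b hV1 hP0 hP (hP0comm H10) (hPcomm H1)
    h10.bddAbove_range h1.bddAbove_range k
  obtain ⟨C₂, hC₂⟩ := stmt15_general b hV2 hP0 hP (hP0comm H20) (hPcomm H2)
    h20.bddAbove_range h2.bddAbove_range k
  exact ⟨max C₁ C₂, fun N => ⟨le_max_of_le_left (hC₁ N), le_max_of_le_right (hC₂ N)⟩⟩

end
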